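/- The volume of the rational polytope {(η1,η2,η3,η4,u) ∈ [0,1]^5 : η_i ≤ u for i = 1,2,3,4, and 2u - 2 ≤ η1 + η2 - η3 - η4 ≤ 2 - 2u} equals 4/45. -/

import Mathlib

/-!
The fibre over `u` is the slab `|η₁ + η₂ - η₃ - η₄| ≤ 2 - 2 * u` of the cube `[0, u]⁴`.
The linear form vanishes at the far corner of the cube, hence changes sign under reflection through
the centre, and the slab is the intersection of two half-space cuts of equal volume whose union is
the whole cube. The volume of a half-space cut of a box is an alternating sum of truncated powers
over the vertices, which follows by induction on the dimension from Fubini's theorem and the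
integral of a truncated power. For the cube the vertices collect into binomial coefficients, and
the volume is `∫ u in 0..1, (1/12 * ∑ k, (-1)ᵏ * choose 4 k * (2 - k * u)₊⁴ - u⁴) = 4/45`.
-/

open MeasureTheory

section Slicing

variable {α β : Type*} [MeasurableSpace α] [MeasurableSpace β]

lemma measureReal_prod_eq_integral {μ : Measure α} {ν : Measure β} [SFinite ν]
    {s : Set (α × β)} (hs : MeasurableSet s) (hs_top : μ.prod ν s ≠ ⊤) :
    (μ.prod ν).real s = ∫ x, ν.real (Prod.mk x ⁻¹' s) ∂μ := by
  simp only [measureReal_def]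
  rw [integral_toReal (measurable_measure_prodMk_left hs).aemeasurable
    (Measure.ae_measure_lt_top hs hs_top), Measure.prod_apply hs]

lemma volume_real_eq_integral_insertNth {n : ℕ} (i : Fin (n + 1)) {s : Set (Fin (n + 1) → ℝ)}
    (hs : MeasurableSet s) (hs_top : volume s ≠ ⊤) {l r : ℝ} (hlr : l ≤ r)
    (hsi : ∀ w ∈ s, w i ∈ Set.Icc l r) :
    volume.real s = ∫ x in l..r, volume.real {v : Fin n → ℝ | i.insertNth x v ∈ s} := by
  have hmp := (volume_preserving_piFinSuccAbove (fun _ : Fin (n + 1) ↦ ℝ) i).symm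
  have hvol := hmp.measure_preimage hs.nullMeasurableSet
  have hempty : ∀ x ∉ Set.Icc l r, volume.real {v : Fin n → ℝ | i.insertNth x v ∈ s} = 0 := by
    intro x hx
    have : {v : Fin n → ℝ | i.insertNth x v ∈ s} = ∅ :=
      Set.eq_empty_of_forall_notMem fun v hv ↦ hx <| by simpa using hsi _ hv
    rw [this, measureReal_empty]
  rw [intervalIntegral.integral_of_le hlr, ← integral_Icc_eq_integral_Ioc,
    setIntegral_eq_integral_of_forall_compl_eq_zero hempty, measureReal_def, ← hvol,
    ← measureReal_def, Measure.volume_eq_prod, measureReal_prod_eq_integral (hmp.measurable hs)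
      (by rwa [← Measure.volume_eq_prod, hvol])]
  rfl

end Slicing

/-- The truncated power `x₊ ^ n`, vanishing on the negative half-line. At `n = 0` it is the
indicator function of `[0, ∞)`, so that it is always the right derivative of `x₊ ^ (n + 1)` up to
the factor `n + 1`. -/
noncomputable def posPow (n : ℕ) (x : ℝ) : ℝ := if 0 ≤ x then x ^ n else 0

section PosPow

variable (n : ℕ)

lemma posPow_of_nonneg {x : ℝ} (hx : 0 ≤ x) : posPow n x = x ^ n := if_pos hx

lemma posPow_of_neg {x : ℝ} (hx : x < 0) : posPow n x = 0 := if_neg hx.not_ge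

lemma posPow_succ (x : ℝ) : posPow (n + 1) x = max x 0 ^ (n + 1) := by
  rcases le_or_gt 0 x with hx | hx
  · rw [posPow_of_nonneg _ hx, max_eq_left hx]
  · rw [posPow_of_neg _ hx, max_eq_right hx.le, zero_pow n.succ_ne_zero]

lemma continuous_posPow_succ : Continuous (posPow (n + 1)) := by
  rw [funext (posPow_succ n)]
  fun_prop

lemma monotone_posPow : Monotone (posPow n) := by
  intro x y hxy
  rcases le_or_gt 0 x with hx | hx
  · rw [posPow_of_nonneg n hx, posPow_of_nonneg n (hx.trans hxy)]
    gcongr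
  · rw [posPow_of_neg n hx, posPow]
    split_ifs <;> positivity

lemma hasDerivWithinAt_posPow_succ (x : ℝ) :
    HasDerivWithinAt (posPow (n + 1)) ((n + 1) * posPow n x) (Set.Ioi x) x := by
  rcases le_or_gt 0 x with hx | hx
  · have hpow : HasDerivWithinAt (fun y : ℝ ↦ y ^ (n + 1)) ((n + 1) * posPow n x)
        (Set.Ioi x) x := by
      simpa [posPow_of_nonneg n hx] using (hasDerivAt_pow (n + 1) x).hasDerivWithinAt
    exact hpow.congr (fun y hy ↦ posPow_of_nonneg _ (hx.trans (le_of_lt hy)))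
      (posPow_of_nonneg _ hx)
  · rw [posPow_of_neg n hx, mul_zero]
    refine ((hasDerivAt_const x (0 : ℝ)).congr_of_eventuallyEq ?_).hasDerivWithinAt
    filter_upwards [gt_mem_nhds hx] with y hy using posPow_of_neg _ hy

lemma integral_posPow (l r : ℝ) :
    ∫ x in l..r, posPow n x = (posPow (n + 1) r - posPow (n + 1) l) / (n + 1) := by
  have hn : (n : ℝ) + 1 ≠ 0 := by positivity
  rw [eq_div_iff hn, mul_comm, ← intervalIntegral.integral_const_mul]
  exact intervalIntegral.integral_eq_sub_of_hasDeriv_right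
    (continuous_posPow_succ n).continuousOn (fun x _ ↦ hasDerivWithinAt_posPow_succ n x)
    ((monotone_posPow n).intervalIntegrable.const_mul _)

lemma integral_posPow_sub_mul {a : ℝ} (ha : a ≠ 0) (c l r : ℝ) :
    ∫ x in l..r, posPow n (c - a * x) =
      (posPow (n + 1) (c - a * l) - posPow (n + 1) (c - a * r)) / ((n + 1) * a) := by
  rw [intervalIntegral.integral_comp_sub_mul _ ha, integral_posPow, smul_eq_mul]
  field_simp

lemma intervalIntegrable_posPow_sub_mul (c a l r : ℝ) :
    IntervalIntegrable (fun x ↦ posPow n (c - a * x)) volume l r := by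
  rcases le_total 0 a with ha | ha
  · exact ((monotone_posPow n).comp_antitone fun x y hxy ↦
      sub_le_sub_left (mul_le_mul_of_nonneg_left hxy ha) c).intervalIntegrable
  · exact ((monotone_posPow n).comp fun x y hxy ↦
      sub_le_sub_left (mul_le_mul_of_nonpos_left hxy ha) c).intervalIntegrable

end PosPow

lemma sum_finset_fin_succ {M : Type*} [AddCommMonoid M] {n : ℕ} (f : Finset (Fin (n + 1)) → M) :
    ∑ S, f S = ∑ S : Finset (Fin n),
      (f (S.map (Fin.succEmb n)) + f (insert 0 (S.map (Fin.succEmb n)))) := by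
  have huniv : (Finset.univ : Finset (Fin (n + 1))) =
      insert 0 (Finset.univ.map (Fin.succEmb n)) := by
    ext i
    cases i using Fin.cases <;> simp
  have hpow : ((Finset.univ : Finset (Fin n)).map (Fin.succEmb n)).powerset =
      Finset.univ.map (Finset.mapEmbedding (Fin.succEmb n)).toEmbedding := by
    ext S
    simp [Finset.subset_map_iff, eq_comm]
  rw [← Finset.powerset_univ, huniv,
    Finset.sum_powerset_insert (by simp), hpow, Finset.sum_map, Finset.sum_map,
    Finset.sum_add_distrib]
  rfl

/-- The part of the box `∏ [0, bᵢ]` lying in the half-space `∑ aᵢ wᵢ ≤ t`. -/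
def cutBox {n : ℕ} (a b : Fin n → ℝ) (t : ℝ) : Set (Fin n → ℝ) :=
  {w ∈ Set.Icc 0 b | ∑ i, a i * w i ≤ t}

section CutBox

variable {n : ℕ}

lemma measurableSet_cutBox (a b : Fin n → ℝ) (t : ℝ) : MeasurableSet (cutBox a b t) :=
  measurableSet_Icc.inter (measurableSet_le (f := fun w : Fin n → ℝ ↦ ∑ i, a i * w i) (by fun_prop)
    measurable_const)

lemma volume_cutBox_ne_top (a b : Fin n → ℝ) (t : ℝ) : volume (cutBox a b t) ≠ ⊤ :=
  measure_ne_top_of_subset (Set.sep_subset _ _) isCompact_Icc.measure_ne_top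

lemma setOf_cons_mem_cutBox (a b : Fin (n + 1) → ℝ) (t : ℝ) {x : ℝ} (hx : x ∈ Set.Icc 0 (b 0)) :
    {v : Fin n → ℝ | (0 : Fin (n + 1)).insertNth x v ∈ cutBox a b t} =
      cutBox (fun i ↦ a i.succ) (fun i ↦ b i.succ) (t - a 0 * x) := by
  ext v
  simp [cutBox, Pi.le_def, Fin.forall_fin_succ, Fin.sum_univ_succ, hx.1, hx.2, le_sub_iff_add_le']

lemma volume_real_cutBox_succ (a b : Fin (n + 1) → ℝ) (hb : 0 ≤ b 0) (t : ℝ) :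
    volume.real (cutBox a b t) =
      ∫ x in 0..b 0, volume.real
        (cutBox (fun i : Fin n ↦ a i.succ) (fun i ↦ b i.succ) (t - a 0 * x)) := by
  rw [volume_real_eq_integral_insertNth 0 (measurableSet_cutBox a b t)
    (volume_cutBox_ne_top a b t) hb fun w hw ↦ ⟨hw.1.1 0, hw.1.2 0⟩]
  refine intervalIntegral.integral_congr fun x hx ↦ ?_
  rw [Set.uIcc_of_le hb] at hx
  simp only [setOf_cons_mem_cutBox a b t hx]

/-- Inclusion–exclusion over the vertices `∑_{i ∈ S} bᵢ eᵢ` of the box. -/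
theorem volume_real_cutBox {a b : Fin n → ℝ} (ha : ∀ i, a i ≠ 0) (hb : 0 ≤ b) (t : ℝ) :
    volume.real (cutBox a b t) =
      (∑ S, (-1) ^ S.card * posPow n (t - ∑ i ∈ S, a i * b i)) / (n.factorial * ∏ i, a i) := by
  induction n generalizing t with
  | zero =>
    have hvol : volume.real (Set.univ : Set (Fin 0 → ℝ)) = 1 := by
      simp [measureReal_def, volume_pi]
    by_cases ht : 0 ≤ t <;>
      simp [cutBox, hvol, posPow, ht, Finset.univ_unique, Finset.eq_empty_of_isEmpty]
  | succ n ih =>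
    have hslice (x : ℝ) :=
      ih (fun i ↦ ha i.succ) (fun i ↦ hb i.succ) (t - a 0 * x)
    simp only [volume_real_cutBox_succ a b (hb 0), hslice, sub_right_comm t (a 0 * _)]
    rw [intervalIntegral.integral_div, intervalIntegral.integral_finsetSum fun S _ ↦
      (intervalIntegrable_posPow_sub_mul n _ _ _ _).const_mul _, sum_finset_fin_succ,
      Finset.sum_div, Finset.sum_div]
    refine Finset.sum_congr rfl fun S _ ↦ ?_
    have h_notMem : (0 : Fin (n + 1)) ∉ S.map (Fin.succEmb n) := by simp
    rw [intervalIntegral.integral_const_mul, integral_posPow_sub_mul n (ha 0),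
      Finset.sum_insert h_notMem, Finset.card_insert_of_notMem h_notMem, Finset.card_map,
      Finset.sum_map, Fin.prod_univ_succ, Nat.factorial_succ]
    simp only [Fin.coe_succEmb, mul_zero, sub_zero, ← sub_sub, sub_right_comm t (a 0 * b 0)]
    push_cast
    field_simp
    ring

lemma volume_real_slab {a b : Fin n → ℝ} (hab : ∑ i, a i * b i = 0) {s : ℝ} (hs : 0 ≤ s) :
    volume.real {w ∈ Set.Icc 0 b | |∑ i, a i * w i| ≤ s} =
      2 * volume.real (cutBox a b s) - volume.real (Set.Icc 0 b) := by
  have hmeas : MeasurableSet ((b - ·) ⁻¹' cutBox a b s) :=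
    (measurableSet_cutBox a b s).preimage (by fun_prop)
  have hsum : ∀ w : Fin n → ℝ, ∑ i, a i * (b - w) i = -∑ i, a i * w i := by
    intro w
    simp [mul_sub, hab]
  have hmem : ∀ w, w ∈ (b - ·) ⁻¹' cutBox a b s ↔ w ∈ Set.Icc 0 b ∧ -s ≤ ∑ i, a i * w i := by
    intro w
    change b - w ∈ Set.Icc 0 b ∧ ∑ i, a i * (b - w) i ≤ s ↔ _
    rw [hsum, neg_le, Set.sub_mem_Icc_iff_right, sub_self, sub_zero]
  have hinter : {w ∈ Set.Icc 0 b | |∑ i, a i * w i| ≤ s} =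
      cutBox a b s ∩ (b - ·) ⁻¹' cutBox a b s := by
    ext w
    rw [Set.mem_inter_iff, hmem]
    simp only [cutBox, Set.mem_ofPred_eq, abs_le]
    tauto
  have hunion : cutBox a b s ∪ (b - ·) ⁻¹' cutBox a b s = Set.Icc 0 b := by
    ext w
    rw [Set.mem_union, hmem]
    simp only [cutBox, Set.mem_ofPred_eq, ← and_or_left, and_iff_left_iff_imp]
    intro _
    by_contra! h
    linarith
  have hreflect : volume ((b - ·) ⁻¹' cutBox a b s) = volume (cutBox a b s) :=
    (Measure.measurePreserving_sub_left volume b).measure_preimage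
      (measurableSet_cutBox a b s).nullMeasurableSet
  have h := measureReal_union_add_inter (s := cutBox a b s) hmeas (volume_cutBox_ne_top a b s)
    (hreflect ▸ volume_cutBox_ne_top a b s)
  rw [hunion, ← hinter] at h
  simp only [measureReal_def, hreflect] at h ⊢
  linarith

end CutBox

lemma sum_neg_one_pow_card_mul_sum_signs (f : ℝ → ℝ) :
    ∑ S, (-1) ^ S.card * f (∑ i ∈ S, ![1, 1, -1, -1] i) =
      ∑ k ∈ Finset.range 5, (-1) ^ k * Nat.choose 4 k * f (k - 2) := by
  have hempty : (default : Finset (Fin 0)) = ∅ := Finset.eq_empty_of_isEmpty _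
  norm_num [sum_finset_fin_succ, Finset.sum_range_succ, Nat.choose, hempty]
  ring

lemma volume_real_cutBox_signs {u : ℝ} (hu : 0 ≤ u) (t : ℝ) :
    volume.real (cutBox ![1, 1, -1, -1] (fun _ ↦ u) t) =
      (∑ k ∈ Finset.range 5, (-1) ^ k * Nat.choose 4 k * posPow 4 (t - (k - 2) * u)) / 24 := by
  rw [volume_real_cutBox (by simp [Fin.forall_fin_succ]) fun _ ↦ hu]
  simp only [← Finset.sum_mul]
  rw [sum_neg_one_pow_card_mul_sum_signs fun x ↦ posPow 4 (t - x * u)]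
  norm_num [Fin.prod_univ_succ, Nat.factorial]

lemma volume_real_signs_slab {u : ℝ} (hu : u ∈ Set.Icc (0 : ℝ) 1) :
    volume.real {v ∈ Set.Icc 0 fun _ ↦ u | |∑ i, ![1, 1, -1, -1] i * v i| ≤ 2 - 2 * u} =
      (∑ k ∈ Finset.range 5, (-1) ^ k * Nat.choose 4 k * posPow 4 (2 - k * u)) / 12 - u ^ 4 := by
  have hvertex (k : ℝ) : 2 - 2 * u - (k - 2) * u = 2 - k * u := by ring
  have hcube : volume.real (Set.Icc (0 : Fin 4 → ℝ) fun _ ↦ u) = u ^ 4 := by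
    rw [measureReal_def, Real.volume_Icc_pi_toReal (a := 0) fun _ ↦ hu.1]
    simp
  rw [volume_real_slab (by simp [Fin.sum_univ_succ]) (by linarith [hu.2]),
    volume_real_cutBox_signs hu.1, hcube]
  simp only [hvertex]
  ring

lemma integral_signs_slab :
    ∫ u in (0 : ℝ)..1, ((∑ k ∈ Finset.range 5,
      (-1) ^ k * Nat.choose 4 k * posPow 4 (2 - k * u)) / 12 - u ^ 4) = 4 / 45 := by
  have hcont : Continuous (posPow 4) := continuous_posPow_succ 3
  have hzero : ∫ u in (0 : ℝ)..1, posPow 4 (2 - (0 : ℕ) * u) = 16 := by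
    norm_num [posPow]
  have hpos : ∀ k : ℕ, k ≠ 0 →
      ∫ u in (0 : ℝ)..1, posPow 4 (2 - k * u) = (32 - posPow 5 (2 - k)) / (5 * k) := by
    intro k hk
    rw [integral_posPow_sub_mul 4 (Nat.cast_ne_zero.2 hk)]
    norm_num [posPow]
  rw [intervalIntegral.integral_sub
      (Continuous.intervalIntegrable (by fun_prop) _ _) (by simp),
    intervalIntegral.integral_div,
    intervalIntegral.integral_finsetSum
      fun k _ ↦ Continuous.intervalIntegrable (by fun_prop) _ _, integral_pow]
  simp only [Finset.sum_range_succ, Finset.sum_range_zero, intervalIntegral.integral_const_mul,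
    hzero, hpos _ (Nat.succ_ne_zero _)]
  norm_num [posPow, Nat.choose]

/-- The polytope of points `(η₁, η₂, η₃, η₄, u)` whose volume is computed, `u` being the last
coordinate. -/
def etaPolytope : Set (Fin 5 → ℝ) :=
  {z | (∀ i, 0 ≤ z i ∧ z i ≤ 1) ∧
    z 0 ≤ z 4 ∧ z 1 ≤ z 4 ∧ z 2 ≤ z 4 ∧ z 3 ≤ z 4 ∧
    2 * z 4 - 2 ≤ z 0 + z 1 - z 2 - z 3 ∧
    z 0 + z 1 - z 2 - z 3 ≤ 2 - 2 * z 4}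

lemma etaPolytope_subset_Icc : etaPolytope ⊆ Set.Icc 0 1 :=
  fun _ hz ↦ ⟨fun i ↦ (hz.1 i).1, fun i ↦ (hz.1 i).2⟩

lemma measurableSet_etaPolytope : MeasurableSet etaPolytope := by
  unfold etaPolytope
  measurability

lemma volume_etaPolytope_ne_top : volume etaPolytope ≠ ⊤ :=
  measure_ne_top_of_subset etaPolytope_subset_Icc isCompact_Icc.measure_ne_top

lemma setOf_insertNth_last_mem_etaPolytope {u : ℝ} (hu : u ∈ Set.Icc (0 : ℝ) 1) :
    {v : Fin 4 → ℝ | (Fin.last 4).insertNth u v ∈ etaPolytope} =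
      {v ∈ Set.Icc 0 fun _ ↦ u | |∑ i, ![1, 1, -1, -1] i * v i| ≤ 2 - 2 * u} := by
  ext v
  have hbounds : (∀ i, 0 ≤ (Fin.last 4).insertNth (α := fun _ ↦ ℝ) u v i ∧
      (Fin.last 4).insertNth (α := fun _ ↦ ℝ) u v i ≤ 1) ↔ ∀ i, 0 ≤ v i ∧ v i ≤ 1 := by
    rw [Fin.forall_iff_succAbove (Fin.last 4)]
    simp only [Fin.insertNth_apply_same, Fin.insertNth_apply_succAbove, hu.1, hu.2, true_and]
  have hsum : ∑ i, ![1, 1, -1, -1] i * v i = v 0 + v 1 - v 2 - v 3 := by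
    simp [Fin.sum_univ_four, sub_eq_add_neg]
  change (∀ i, 0 ≤ (Fin.last 4).insertNth (α := fun _ ↦ ℝ) u v i ∧
      (Fin.last 4).insertNth (α := fun _ ↦ ℝ) u v i ≤ 1) ∧
      v 0 ≤ u ∧ v 1 ≤ u ∧ v 2 ≤ u ∧ v 3 ≤ u ∧
      2 * u - 2 ≤ v 0 + v 1 - v 2 - v 3 ∧ v 0 + v 1 - v 2 - v 3 ≤ 2 - 2 * u ↔
    v ∈ Set.Icc 0 (fun _ ↦ u) ∧ |∑ i, ![1, 1, -1, -1] i * v i| ≤ 2 - 2 * u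
  rw [hbounds, hsum, abs_le, neg_sub]
  simp only [Set.mem_Icc, Pi.le_def, Pi.zero_apply, Fin.forall_fin_succ]
  grind [hu.2]

theorem stmt_11 :
    volume {z : Fin 5 → ℝ |
        (∀ i, 0 ≤ z i ∧ z i ≤ 1) ∧
        z 0 ≤ z 4 ∧ z 1 ≤ z 4 ∧ z 2 ≤ z 4 ∧ z 3 ≤ z 4 ∧
        2 * z 4 - 2 ≤ z 0 + z 1 - z 2 - z 3 ∧
        z 0 + z 1 - z 2 - z 3 ≤ 2 - 2 * z 4} = ENNReal.ofReal (4 / 45) := by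
  change volume etaPolytope = _
  rw [← ofReal_measureReal volume_etaPolytope_ne_top,
    volume_real_eq_integral_insertNth (Fin.last 4) measurableSet_etaPolytope
      volume_etaPolytope_ne_top zero_le_one fun z hz ↦ hz.1 _,
    ← integral_signs_slab]
  refine congrArg _ (intervalIntegral.integral_congr fun u hu ↦ ?_)
  rw [Set.uIcc_of_le zero_le_one] at hu
  simp only [setOf_insertNth_last_mem_etaPolytope hu, volume_real_signs_slab hu]
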